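/- Let α, β, γ be intuitionistic fuzzy values with α ⊊ β ⊊ γ in Atanassov's order. Then JS(α, β) < JS(α, γ) and JS(β, γ) < JS(α, γ). -/

import Mathlib

/-- `L p q = p·log₂(2p/(p+q)) + q·log₂(2q/(p+q))`, with Lean's conventions
`0 * log₂ _ = 0` and `x / 0 = 0`, `log₂ 0 = 0` implementing `0·log 0 = 0`
and `0·log(0/0) = 0`. -/
noncomputable def L (p q : ℝ) : ℝ :=
  p * Real.logb 2 (2 * p / (p + q)) + q * Real.logb 2 (2 * q / (p + q))

/-- An intuitionistic fuzzy value: a pair `⟨μ, ν⟩` with `0 ≤ μ`, `0 ≤ ν`,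
`μ + ν ≤ 1` (hence also `μ ≤ 1` and `ν ≤ 1`). -/
@[ext]
structure IFV where
  mu : ℝ
  nu : ℝ
  mu_nonneg : 0 ≤ mu
  nu_nonneg : 0 ≤ nu
  sum_le : mu + nu ≤ 1

/-- `Z(α,β) = L(1−μ_α, 1−μ_β) + L(ν_α, ν_β)`. -/
noncomputable def Z (a b : IFV) : ℝ := L (1 - a.mu) (1 - b.mu) + L a.nu b.nu

/-- The normalized Jensen–Shannon IF divergence `JS(α,β) = √(Z(α,β)/2)`. -/
noncomputable def JS (a b : IFV) : ℝ := Real.sqrt (Z a b / 2)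

/-- Atanassov's order: `α ⊂ β` iff `μ_α ≤ μ_β` and `ν_α ≥ ν_β`. -/
def IFV.sub (a b : IFV) : Prop := a.mu ≤ b.mu ∧ b.nu ≤ a.nu

/-- Strict Atanassov order: `α ⊊ β` iff `α ⊂ β` and `α ≠ β`. -/
def IFV.ssub (a b : IFV) : Prop := a.sub b ∧ a ≠ b

/-- The IFV `⟨1, 0⟩`. -/
def IFV.posOne : IFV := ⟨1, 0, by norm_num, le_rfl, by norm_num⟩

/-- The IFV `⟨0, 1⟩`. -/
def IFV.negOne : IFV := ⟨0, 1, le_rfl, by norm_num, by norm_num⟩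

/-!
With `φ x = x log x`, the quantity `L p q` is a positive multiple of the Jensen gap
`(φ p + φ q) / 2 - φ ((p + q) / 2)`. For a strictly convex function the Jensen gap strictly shrinks
when one of the two points moves towards the other. Along a chain `α ⊂ β ⊂ γ` both coordinates
`1 - μ` and `ν` decrease, so neither of the two terms of `Z α γ` grows when `γ` or `α` is replaced
by `β`, and if that replacement is strict then at least one of them strictly shrinks.
-/

section JensenGap

variable {𝕜 E : Type*} [Field 𝕜] [AddCommGroup E] [Module 𝕜 E]

/-- The midpoint Jensen gap of `f` at `x` and `y`, which measures how far `f` is from being affine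
on the segment between them. -/
def jensenGap (f : E → 𝕜) (x y : E) : 𝕜 :=
  (f x + f y) / 2 - f ((2⁻¹ : 𝕜) • (x + y))

theorem jensenGap_comm (f : E → 𝕜) (x y : E) : jensenGap f x y = jensenGap f y x := by
  rw [jensenGap, jensenGap, add_comm (f x), add_comm x]

variable [LinearOrder 𝕜] [IsStrictOrderedRing 𝕜]

theorem jensenGap_nonneg {s : Set E} {f : E → 𝕜} {x y : E} (hf : ConvexOn 𝕜 s f) (hx : x ∈ s)
    (hy : y ∈ s) : 0 ≤ jensenGap f x y := by
  have h_half : (0 : 𝕜) ≤ 2⁻¹ := by positivity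
  have h := hf.2 hx hy h_half h_half (by norm_num)
  rw [← smul_add, smul_eq_mul, smul_eq_mul] at h
  rw [jensenGap]
  linarith

theorem map_lineMap_add_two_mul_map_lineMap_lt {s : Set E} {f : E → 𝕜} {x y : E} {v : 𝕜}
    (hf : StrictConvexOn 𝕜 s f) (hx : x ∈ s) (hy : y ∈ s) (hxy : x ≠ y)
    (hv : v ∈ Set.Ico (2⁻¹ : 𝕜) 1) :
    f (AffineMap.lineMap x y (2 - 2 * v)) + 2 * f (AffineMap.lineMap x y v) < f x + 2 * f y := by
  obtain ⟨hv_half, hv_one⟩ := hv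
  have h_first : f (AffineMap.lineMap x y (2 - 2 * v)) ≤
      (1 - (2 - 2 * v)) * f x + (2 - 2 * v) * f y := by
    rw [AffineMap.lineMap_apply_module]
    exact hf.convexOn.2 hx hy (by linarith) (by linarith) (by ring)
  have h_second : f (AffineMap.lineMap x y v) < (1 - v) * f x + v * f y := by
    rw [AffineMap.lineMap_apply_module]
    exact hf.2 hx hy hxy (by linarith) (by linarith) (by ring)
  linarith

theorem jensenGap_lt_of_wbtw {s : Set E} {f : E → 𝕜} {x y z : E} (hf : StrictConvexOn 𝕜 s f)
    (hx : x ∈ s) (hz : z ∈ s) (hxyz : Wbtw 𝕜 x y z) (hyx : y ≠ x) :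
    jensenGap f y z < jensenGap f x z := by
  have hy : y ∈ s := hf.1.segment_subset hx hz (mem_segment_iff_wbtw.2 hxyz)
  obtain ⟨t, ⟨ht₀, ht₁⟩, ht⟩ := hxyz
  rw [AffineMap.lineMap_apply_module] at ht
  have ht_pos : 0 < t := by
    refine ht₀.lt_of_ne' fun ht_zero ↦ hyx ?_
    rw [← ht, ht_zero, sub_zero, one_smul, zero_smul, add_zero]
  set n : E := (2⁻¹ : 𝕜) • (y + z) with hn
  have hns : n ∈ s := by
    rw [hn, smul_add]
    exact hf.1 hy hz (by positivity) (by positivity) (by norm_num)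
  -- With `m` the midpoint of `x` and `z`, one has `y + 2 • m = x + 2 • n`, and both `y` and `m` lie
  -- on the segment from `x` to `n`.
  have y_eq : AffineMap.lineMap x n (2 - 2 * (1 / (1 + t))) = y := by
    rw [AffineMap.lineMap_apply_module, hn, ← ht]
    match_scalars <;> field_simp <;> ring
  have mid_eq : AffineMap.lineMap x n (1 / (1 + t)) = (2⁻¹ : 𝕜) • (x + z) := by
    rw [AffineMap.lineMap_apply_module, hn, ← ht]
    match_scalars <;> field_simp <;> ring
  have hxn : x ≠ n := by
    intro h
    rw [← h, AffineMap.lineMap_same_apply] at y_eq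
    exact hyx y_eq.symm
  have hv : 1 / (1 + t) ∈ Set.Ico (2⁻¹ : 𝕜) 1 := by
    rw [one_div]
    exact ⟨inv_anti₀ (by positivity) (by linarith), inv_lt_one_of_one_lt₀ (by linarith)⟩
  have h_lt := map_lineMap_add_two_mul_map_lineMap_lt hf hx hns hxn hv
  rw [y_eq, mid_eq] at h_lt
  rw [jensenGap, jensenGap, ← hn]
  linarith

theorem strictMonoOn_jensenGap_left {s : Set 𝕜} {f : 𝕜 → 𝕜} {y : 𝕜} (hf : StrictConvexOn 𝕜 s f)
    (hy : y ∈ s) : StrictMonoOn (jensenGap f · y) (s ∩ Set.Ici y) :=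
  fun _ hx _ hx' hlt ↦
    jensenGap_lt_of_wbtw hf hx'.1 hy (Wbtw.of_le_of_le hx.2 hlt.le).symm hlt.ne

theorem strictAntiOn_jensenGap_left {s : Set 𝕜} {f : 𝕜 → 𝕜} {y : 𝕜} (hf : StrictConvexOn 𝕜 s f)
    (hy : y ∈ s) : StrictAntiOn (jensenGap f · y) (s ∩ Set.Iic y) :=
  fun _ hx _ hx' hlt ↦
    jensenGap_lt_of_wbtw hf hx.1 hy (Wbtw.of_le_of_le hlt.le hx'.2) hlt.ne'

end JensenGap

theorem mul_log_two_mul_div_add {p q : ℝ} (hp : 0 ≤ p) (hq : 0 ≤ q) :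
    p * Real.log (2 * p / (p + q)) = p * Real.log p - p * Real.log ((p + q) / 2) := by
  rcases hp.eq_or_lt with rfl | hp
  · simp
  · have h_div : 2 * p / (p + q) = p / ((p + q) / 2) := by field_simp
    rw [h_div, Real.log_div hp.ne' (by positivity), mul_sub]

theorem L_eq_jensenGap {p q : ℝ} (hp : 0 ≤ p) (hq : 0 ≤ q) :
    L p q = 2 / Real.log 2 * jensenGap (fun x ↦ x * Real.log x) p q := by
  have h_mid : (2⁻¹ : ℝ) • (p + q) = (p + q) / 2 := by rw [smul_eq_mul, inv_mul_eq_div]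
  have hp_log := mul_log_two_mul_div_add hp hq
  have hq_log := mul_log_two_mul_div_add hq hp
  rw [add_comm q p] at hq_log
  rw [L, Real.logb, Real.logb, mul_div_assoc', mul_div_assoc', hp_log, hq_log, jensenGap, h_mid]
  ring

theorem L_nonneg {p q : ℝ} (hp : 0 ≤ p) (hq : 0 ≤ q) : 0 ≤ L p q := by
  rw [L_eq_jensenGap hp hq]
  exact mul_nonneg (by positivity) (jensenGap_nonneg Real.convexOn_mul_log hp hq)

theorem strictMonoOn_L_left {q : ℝ} (hq : 0 ≤ q) : StrictMonoOn (L · q) (Set.Ici q) := by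
  intro p hp p' hp' hlt
  have hp₀ : 0 ≤ p := hq.trans hp
  have hp₀' : 0 ≤ p' := hq.trans hp'
  simp only [L_eq_jensenGap hp₀ hq, L_eq_jensenGap hp₀' hq]
  gcongr
  exact strictMonoOn_jensenGap_left Real.strictConvexOn_mul_log hq ⟨hp₀, hp⟩ ⟨hp₀', hp'⟩ hlt

theorem strictAntiOn_L_right {p : ℝ} : StrictAntiOn (L p) (Set.Icc 0 p) := by
  intro q hq q' hq' hlt
  have hp : 0 ≤ p := hq.1.trans hq.2
  rw [L_eq_jensenGap hp hq.1, L_eq_jensenGap hp hq'.1, jensenGap_comm _ p, jensenGap_comm _ p]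
  gcongr
  exact strictAntiOn_jensenGap_left Real.strictConvexOn_mul_log hp hq hq' hlt

theorem IFV.mu_le_one (a : IFV) : a.mu ≤ 1 := by
  linarith [a.nu_nonneg, a.sum_le]

theorem IFV.ssub.mu_lt_or_nu_lt {a b : IFV} (h : a.ssub b) : a.mu < b.mu ∨ b.nu < a.nu := by
  obtain ⟨⟨h_mu, h_nu⟩, h_ne⟩ := h
  contrapose! h_ne
  exact IFV.ext (h_mu.antisymm h_ne.1) (h_ne.2.antisymm h_nu)

theorem Z_nonneg (a b : IFV) : 0 ≤ Z a b :=
  add_nonneg (L_nonneg (sub_nonneg.2 a.mu_le_one) (sub_nonneg.2 b.mu_le_one))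
    (L_nonneg a.nu_nonneg b.nu_nonneg)

theorem JS_lt_JS_iff {a b c d : IFV} : JS a b < JS c d ↔ Z a b < Z c d := by
  rw [JS, JS, Real.sqrt_lt_sqrt_iff (div_nonneg (Z_nonneg a b) zero_le_two),
    div_lt_div_iff_of_pos_right zero_lt_two]

theorem JS_lt_JS_of_sub_of_ssub {a b c : IFV} (hab : a.sub b) (hbc : b.ssub c) :
    JS a b < JS a c := by
  have hb_mu : 1 - b.mu ∈ Set.Icc 0 (1 - a.mu) :=
    ⟨sub_nonneg.2 b.mu_le_one, sub_le_sub_left hab.1 1⟩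
  have hc_mu : 1 - c.mu ∈ Set.Icc 0 (1 - a.mu) :=
    ⟨sub_nonneg.2 c.mu_le_one, sub_le_sub_left (hab.1.trans hbc.1.1) 1⟩
  have hb_nu : b.nu ∈ Set.Icc 0 a.nu := ⟨b.nu_nonneg, hab.2⟩
  have hc_nu : c.nu ∈ Set.Icc 0 a.nu := ⟨c.nu_nonneg, hbc.1.2.trans hab.2⟩
  have L_mu_le := strictAntiOn_L_right.antitoneOn hc_mu hb_mu (sub_le_sub_left hbc.1.1 1)
  have L_nu_le := strictAntiOn_L_right.antitoneOn hc_nu hb_nu hbc.1.2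
  rw [JS_lt_JS_iff, Z, Z]
  rcases hbc.mu_lt_or_nu_lt with h_mu | h_nu
  · exact add_lt_add_of_lt_of_le
      (strictAntiOn_L_right hc_mu hb_mu (sub_lt_sub_left h_mu 1)) L_nu_le
  · exact add_lt_add_of_le_of_lt L_mu_le (strictAntiOn_L_right hc_nu hb_nu h_nu)

theorem JS_lt_JS_of_ssub_of_sub {a b c : IFV} (hab : a.ssub b) (hbc : b.sub c) :
    JS b c < JS a c := by
  have strictMonoOn_mu := strictMonoOn_L_left (sub_nonneg.2 c.mu_le_one)
  have strictMonoOn_nu := strictMonoOn_L_left c.nu_nonneg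
  have ha_mu : 1 - c.mu ≤ 1 - a.mu := sub_le_sub_left (hab.1.1.trans hbc.1) 1
  have hb_mu : 1 - c.mu ≤ 1 - b.mu := sub_le_sub_left hbc.1 1
  have ha_nu : c.nu ≤ a.nu := hbc.2.trans hab.1.2
  have L_mu_le := strictMonoOn_mu.monotoneOn hb_mu ha_mu (sub_le_sub_left hab.1.1 1)
  have L_nu_le := strictMonoOn_nu.monotoneOn hbc.2 ha_nu hab.1.2
  rw [JS_lt_JS_iff, Z, Z]
  rcases hab.mu_lt_or_nu_lt with h_mu | h_nu
  · exact add_lt_add_of_lt_of_le (strictMonoOn_mu hb_mu ha_mu (sub_lt_sub_left h_mu 1)) L_nu_le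
  · exact add_lt_add_of_le_of_lt L_mu_le (strictMonoOn_nu hbc.2 ha_nu h_nu)

theorem JS_ssub_chain_lt (a b c : IFV) (h1 : a.ssub b) (h2 : b.ssub c) :
    JS a b < JS a c ∧ JS b c < JS a c :=
  ⟨JS_lt_JS_of_sub_of_ssub h1.1 h2, JS_lt_JS_of_ssub_of_sub h1 h2.1⟩
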